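/- Let S be the usual step-reinforced random walk on (ℤ₂, +) with reinforcement parameter α ∈ [0,1) and step distribution μ(0) = μ(1) = 1/2, and let (R_n)_{n≥1} be the elephant polynomials with the same parameter α. Then for every n ≥ 1, E[exp(iπ S_n)] = 2ℙ(S_n = 0) − 1 = iⁿ·R_n(0). -/

import Mathlib

open MeasureTheory ProbabilityTheory Filter Polynomial
open scoped ENNReal NNReal Topology

namespace SRRW

variable {Ω : Type*} [MeasurableSpace Ω] {V : Type*} [AddCommGroup V] [MeasurableSpace V]

/-- The family combining `(ξ_n)`, `(u_n)` and `(g_n)`, with values in the common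
measurable space `Bool ⊕ ℕ ⊕ V`. -/
def fam (ξ : ℕ → Ω → Bool) (u : ℕ → Ω → ℕ) (g : ℕ → Ω → V) :
    (ℕ ⊕ ℕ ⊕ ℕ) → Ω → (Bool ⊕ ℕ ⊕ V)
  | .inl n => fun ω => .inl (ξ n ω)
  | .inr (.inl n) => fun ω => .inr (.inl (u n ω))
  | .inr (.inr n) => fun ω => .inr (.inr (g n ω))

/-- The driving randomness of a (generalized) step-reinforced random walk:
`(ξ_n)_{n ≥ 2}` are i.i.d. Bernoulli(α), `(u_n)_{n ≥ 2}` are independent with `u_n`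
uniform on `{1, …, n-1}`, `(g_n)_{n ≥ 1}` are i.i.d. with law `μ` (the fresh steps),
and all of them are jointly independent. -/
structure IsDriving (P : Measure Ω) (α : ℝ) (μ : Measure V)
    (ξ : ℕ → Ω → Bool) (u : ℕ → Ω → ℕ) (g : ℕ → Ω → V) : Prop where
  meas_ξ : ∀ n, Measurable (ξ n)
  meas_u : ∀ n, Measurable (u n)
  meas_g : ∀ n, Measurable (g n)
  ξ_law : ∀ n, 2 ≤ n → P {ω | ξ n ω = true} = ENNReal.ofReal α
  u_range : ∀ n, 2 ≤ n → ∀ ω, 1 ≤ u n ω ∧ u n ω < n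
  u_law : ∀ n, 2 ≤ n → ∀ k, 1 ≤ k → k < n → P {ω | u n ω = k} = ((n - 1 : ℕ) : ℝ≥0∞)⁻¹
  g_law : ∀ n, 1 ≤ n → P.map (g n) = μ
  indep : iIndepFun (fam ξ u g) P

/-- `X` is the step sequence of a generalized step-reinforced random walk (written
additively) with reinforcement parameter `α`, step distribution `μ` and transformations
`(T_n)_{n ≥ 2}`: `X_1 = g_1` and, for `n ≥ 2`, `X_n = T_n(X_{u_n})` if `ξ_n = 1` while
`X_n = g_n` (a fresh `μ`-distributed step) if `ξ_n = 0`.  Each `T_n` is a (random)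
measurable transformation of `V` which is independent of `(ξ_k)_{k ≥ n}`, `(u_k)_{k ≥ n}`
and of the fresh steps `(g_k)_{k ≥ n}`. -/
def IsGenSRRWAdd (P : Measure Ω) (α : ℝ) (μ : Measure V)
    (T : ℕ → Ω → V → V) (X : ℕ → Ω → V) : Prop :=
  ∃ ξ u g, IsDriving P α μ ξ u g ∧
    (∀ n, Measurable (Function.uncurry (T n))) ∧
    (∀ n, 2 ≤ n → IndepFun
      (fun ω (k : {k : ℕ // n ≤ k}) => (ξ k ω, u k ω, g k ω))
      (fun ω => T n ω) P) ∧
    (∀ ω, X 1 ω = g 1 ω) ∧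
    (∀ n, 2 ≤ n → ∀ ω, X n ω = if ξ n ω then T n ω (X (u n ω) ω) else g n ω)

/-- `X` is the step sequence of a usual step-reinforced random walk (all transformations
are the identity). -/
def IsSRRWAdd (P : Measure Ω) (α : ℝ) (μ : Measure V) (X : ℕ → Ω → V) : Prop :=
  IsGenSRRWAdd P α μ (fun _ _ => id) X

/-- The position of the walk: `S_n = X_1 + X_2 + ⋯ + X_n`. -/
def pos (X : ℕ → Ω → V) (n : ℕ) (ω : Ω) : V :=
  ∑ k ∈ Finset.range n, X (k + 1) ω

end SRRW

/-- The elephant polynomials: `R_1(x) = x` and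
`R_{n+1}(x) = x R_n(x) - (α/n)(1 - x²) R_n'(x)` for `n ≥ 1`. -/
noncomputable def elephantPoly (α : ℝ) : ℕ → Polynomial ℝ
  | 0 => 1
  | 1 => Polynomial.X
  | n + 2 =>
      Polynomial.X * elephantPoly α (n + 1)
        - Polynomial.C (α / (n + 1)) *
            ((1 - Polynomial.X ^ 2) * Polynomial.derivative (elephantPoly α (n + 1)))

open SRRW

/-!
A character `χ` with values `±1` turns the walk into a product of signs `ε_k = χ(X_k)`, which
again form a step-reinforced sequence, with fair fresh steps.  Since `ε = i exp(-iπε/2)` for a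
sign `ε`, `E[χ(S_n)] = iⁿ φ_n(-π/2)`, where `φ_n` is the characteristic function of
`T_n = ε_1 + ⋯ + ε_n`.  Given the past, `ε_{n+1}` has mean `(α/n) T_n`, and
`exp(iθε) = cos θ + i ε sin θ`, so `φ_{n+1}(θ) = cos θ φ_n(θ) + (α/n) sin θ φ_n'(θ)`.  This is the
defining recursion of the elephant polynomials written for `θ ↦ R_n(cos θ)`; hence
`φ_n(θ) = R_n(cos θ)`, to be evaluated at `θ = -π/2`.
-/

namespace SRRW

lemma measurableEmbedding_inl {β γ : Type*} [MeasurableSpace β] [MeasurableSpace γ] :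
    MeasurableEmbedding (Sum.inl : β → β ⊕ γ) :=
  ⟨Sum.inl_injective, measurable_inl, fun _ hs => hs.inl_image⟩

lemma measurableEmbedding_inr {β γ : Type*} [MeasurableSpace β] [MeasurableSpace γ] :
    MeasurableEmbedding (Sum.inr : γ → β ⊕ γ) :=
  ⟨Sum.inr_injective, measurable_inr, fun _ hs => measurableSet_inr_image.2 hs⟩

section Noise

variable {Ω V : Type*} [MeasurableSpace V]
  {ξ : ℕ → Ω → Bool} {u : ℕ → Ω → ℕ} {g : ℕ → Ω → V} {S S' : Set (ℕ ⊕ ℕ ⊕ ℕ)} {n : ℕ}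

/-- The σ-algebra generated by the driving variables with index in `S`. -/
abbrev noise (ξ : ℕ → Ω → Bool) (u : ℕ → Ω → ℕ) (g : ℕ → Ω → V) (S : Set (ℕ ⊕ ℕ ⊕ ℕ)) :
    MeasurableSpace Ω :=
  ⨆ i ∈ S, MeasurableSpace.comap (fam ξ u g i) inferInstance

/-- The indices of the driving variables `ξ_k`, `u_k`, `g_k` with `k ≤ n`. -/
def past (n : ℕ) : Set (ℕ ⊕ ℕ ⊕ ℕ) :=
  {i | Sum.elim id (Sum.elim id id) i ≤ n}

lemma measurable_fam {i : ℕ ⊕ ℕ ⊕ ℕ} (hi : i ∈ S) : Measurable[noise ξ u g S] (fam ξ u g i) :=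
  measurable_iff_comap_le.2 <|
    le_iSup₂ (f := fun i (_ : i ∈ S) => MeasurableSpace.comap (fam ξ u g i) inferInstance) i hi

lemma measurable_ξ (hn : .inl n ∈ S) : Measurable[noise ξ u g S] (ξ n) :=
  measurableEmbedding_inl.measurable_comp_iff.1 (measurable_fam hn)

lemma measurable_u (hn : .inr (.inl n) ∈ S) : Measurable[noise ξ u g S] (u n) :=
  measurableEmbedding_inl.measurable_comp_iff.1 <|
    measurableEmbedding_inr.measurable_comp_iff.1 (measurable_fam hn)

lemma measurable_g (hn : .inr (.inr n) ∈ S) : Measurable[noise ξ u g S] (g n) :=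
  measurableEmbedding_inr.measurable_comp_iff.1 <|
    measurableEmbedding_inr.measurable_comp_iff.1 (measurable_fam hn)

namespace IsDriving

variable [mΩ : MeasurableSpace Ω] {P : Measure Ω} {α : ℝ} {μ : Measure V}

lemma comap_fam_le (hd : IsDriving P α μ ξ u g) (i : ℕ ⊕ ℕ ⊕ ℕ) :
    MeasurableSpace.comap (fam ξ u g i) inferInstance ≤ mΩ := by
  rw [← measurable_iff_comap_le]
  rcases i with n | n | n
  · exact measurable_inl.comp (hd.meas_ξ n)
  · exact measurable_inr.comp (measurable_inl.comp (hd.meas_u n))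
  · exact measurable_inr.comp (measurable_inr.comp (hd.meas_g n))

lemma noise_le (hd : IsDriving P α μ ξ u g) : noise ξ u g S ≤ mΩ :=
  iSup₂_le fun i _ => hd.comap_fam_le i

lemma indep_noise (hd : IsDriving P α μ ξ u g) (hS : Disjoint S S') :
    Indep (noise ξ u g S) (noise ξ u g S') P :=
  indep_iSup_of_disjoint hd.comap_fam_le hd.indep.iIndep hS

lemma integral_mul (hd : IsDriving P α μ ξ u g) (hS : Disjoint S S') {Y Z : Ω → ℂ}
    (hY : Measurable[noise ξ u g S] Y) (hZ : Measurable[noise ξ u g S'] Z) :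
    ∫ ω, Y ω * Z ω ∂P = (∫ ω, Y ω ∂P) * ∫ ω, Z ω ∂P := by
  have hYZ : IndepFun Y Z P := (IndepFun_iff_Indep _ _ _).2 <|
    indep_of_indep_of_le (hd.indep_noise hS) hY.comap_le hZ.comap_le
  exact hYZ.integral_fun_mul_eq_mul_integral
    (hY.mono hd.noise_le le_rfl).aestronglyMeasurable
    (hZ.mono hd.noise_le le_rfl).aestronglyMeasurable

lemma setIntegral_eq_smul (hd : IsDriving P α μ ξ u g) (hS : Disjoint S S') {A : Set Ω}
    {Z : Ω → ℂ} (hA : MeasurableSet[noise ξ u g S] A) (hZ : Measurable[noise ξ u g S'] Z) :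
    ∫ ω in A, Z ω ∂P = P.real A • ∫ ω, Z ω ∂P :=
  (indep_of_indep_of_le_right (hd.indep_noise hS) hZ.comap_le).setIntegral_eq_smul hd.noise_le
    (f := id) (hZ.mono hd.noise_le le_rfl).aemeasurable hA aestronglyMeasurable_id

lemma measureReal_reinforce (hd : IsDriving P α μ ξ u g) (hα : 0 ≤ α) (hn : 2 ≤ n) :
    P.real (ξ n ⁻¹' {true}) = α := by
  change (P {ω | ξ n ω = true}).toReal = α
  rw [hd.ξ_law n hn, ENNReal.toReal_ofReal hα]

lemma measureReal_fresh (hd : IsDriving P α μ ξ u g) (hα : 0 ≤ α) (hn : 2 ≤ n) :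
    P.real (ξ n ⁻¹' {true})ᶜ = 1 - α := by
  have := hd.indep.isProbabilityMeasure
  rw [probReal_compl_eq_one_sub (hd.meas_ξ n (measurableSet_singleton true)),
    hd.measureReal_reinforce hα hn]

lemma measureReal_reinforce_inter (hd : IsDriving P α μ ξ u g) (hα : 0 ≤ α) (hn : 1 ≤ n)
    {k : ℕ} (hk : k ∈ Finset.Icc 1 n) :
    P.real (ξ (n + 1) ⁻¹' {true} ∩ u (n + 1) ⁻¹' {k}) = α / n := by
  obtain ⟨hk1, hkn⟩ := Finset.mem_Icc.1 hk
  have hind : Indep (noise ξ u g {.inl (n + 1)}) (noise ξ u g {.inr (.inl (n + 1))}) P :=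
    hd.indep_noise (by simp)
  have hinter : P.real (ξ (n + 1) ⁻¹' {true} ∩ u (n + 1) ⁻¹' {k})
      = P.real (ξ (n + 1) ⁻¹' {true}) * P.real (u (n + 1) ⁻¹' {k}) := by
    simp only [measureReal_def, ← ENNReal.toReal_mul]
    exact congrArg _ <| (Indep_iff _ _ _).1 hind _ _
      (measurable_ξ (Set.mem_singleton _) (measurableSet_singleton true))
      (measurable_u (Set.mem_singleton _) (measurableSet_singleton k))
  have hu : P.real (u (n + 1) ⁻¹' {k}) = (n : ℝ)⁻¹ := by
    change (P {ω | u (n + 1) ω = k}).toReal = _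
    simp [hd.u_law (n + 1) (by omega) k hk1 (by omega)]
  rw [hinter, hd.measureReal_reinforce hα (by omega), hu, div_eq_mul_inv]

lemma integral_comp_g (hd : IsDriving P α μ ξ u g) (hn : 1 ≤ n) {f : V → ℂ}
    (hf : Measurable f) : ∫ ω, f (g n ω) ∂P = ∫ v, f v ∂μ := by
  rw [← hd.g_law n hn, integral_map (hd.meas_g n).aemeasurable hf.aestronglyMeasurable]

end IsDriving

end Noise

lemma measurable_apply_random_index {Ω ι V : Type*} [MeasurableSpace Ω] [Countable ι]
    [MeasurableSpace ι] [MeasurableSingletonClass ι] [MeasurableSpace V] {X : ι → Ω → V}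
    {u : Ω → ι} (hu : Measurable u) (hX : ∀ i ∈ Set.range u, Measurable (X i)) :
    Measurable fun ω => X (u ω) ω := by
  intro s hs
  have hpre : (fun ω => X (u ω) ω) ⁻¹' s = ⋃ i ∈ Set.range u, u ⁻¹' {i} ∩ X i ⁻¹' s := by
    ext ω
    simp only [Set.mem_preimage, Set.mem_iUnion, Set.mem_inter_iff, Set.mem_singleton_iff,
      exists_prop]
    exact ⟨fun h => ⟨u ω, ⟨ω, rfl⟩, rfl, h⟩, fun ⟨_, _, hi, h⟩ => hi ▸ h⟩
  rw [hpre]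
  exact .biUnion (Set.to_countable _) fun i hi =>
    (hu (measurableSet_singleton i)).inter (hX i hi hs)

section Reinforcement

variable {Ω V : Type*} [MeasurableSpace Ω] [MeasurableSpace V]
  {P : Measure Ω} {α : ℝ} {μ : Measure V}
  {ξ : ℕ → Ω → Bool} {u : ℕ → Ω → ℕ} {g X : ℕ → Ω → V} {n : ℕ}

/-- `X` is built from the driving variables by the recursion of the usual step-reinforced
random walk; this is `IsSRRWAdd` with its existentially quantified driving variables exposed. -/
structure IsReinforcedBy {Ω V : Type*} (ξ : ℕ → Ω → Bool) (u : ℕ → Ω → ℕ)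
    (g X : ℕ → Ω → V) : Prop where
  one : ∀ ω, X 1 ω = g 1 ω
  step : ∀ n, 2 ≤ n → ∀ ω, X n ω = if ξ n ω then X (u n ω) ω else g n ω

lemma IsSRRWAdd.exists_isReinforcedBy (hX : IsSRRWAdd P α μ X) :
    ∃ ξ u g, IsDriving P α μ ξ u g ∧ IsReinforcedBy ξ u g X := by
  obtain ⟨ξ, u, g, hd, -, -, hone, hstep⟩ := hX
  exact ⟨ξ, u, g, hd, hone, hstep⟩

namespace IsReinforcedBy

lemma exists_eq_fresh (hX : IsReinforcedBy ξ u g X) (hd : IsDriving P α μ ξ u g) (ω : Ω)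
    (hn : 1 ≤ n) : ∃ k, 1 ≤ k ∧ X n ω = g k ω := by
  induction n using Nat.strong_induction_on with
  | _ n ih =>
    obtain rfl | hn2 : n = 1 ∨ 2 ≤ n := by omega
    · exact ⟨1, le_rfl, hX.one ω⟩
    · rw [hX.step n hn2 ω]
      obtain ⟨hu1, hun⟩ := hd.u_range n hn2 ω
      split_ifs
      · exact ih _ hun hu1
      · exact ⟨n, hn, rfl⟩

lemma measurable_noise_past (hX : IsReinforcedBy ξ u g X) (hd : IsDriving P α μ ξ u g)
    {k : ℕ} (hk : 1 ≤ k) (hkn : k ≤ n) : Measurable[noise ξ u g (past n)] (X k) := by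
  induction k using Nat.strong_induction_on with
  | _ k ih =>
    have hg : Measurable[noise ξ u g (past n)] (g k) := measurable_g hkn
    obtain rfl | hk2 : k = 1 ∨ 2 ≤ k := by omega
    · rwa [_root_.funext hX.one]
    · have hξ : Measurable[noise ξ u g (past n)] (ξ k) := measurable_ξ hkn
      have hcopy : Measurable[noise ξ u g (past n)] fun ω => X (u k ω) ω := by
        refine @measurable_apply_random_index _ _ _ (_) _ _ _ _ _ _ (measurable_u hkn) ?_
        rintro _ ⟨ω, rfl⟩
        obtain ⟨hu1, huk⟩ := hd.u_range k hk2 ω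
        exact ih _ huk hu1 (by omega)
      rw [_root_.funext (hX.step k hk2)]
      exact @Measurable.ite _ _ (_) _ _ _ _ _ (hξ (measurableSet_singleton true)) hcopy hg

lemma setIntegral_reinforce_inter (hX : IsReinforcedBy ξ u g X) (hd : IsDriving P α μ ξ u g)
    (hα : 0 ≤ α) (hn : 1 ≤ n) {Z : Ω → ℂ} (hZ : Measurable[noise ξ u g (past n)] Z)
    {f : V → ℂ} (hf : Measurable f) {k : ℕ} (hk : k ∈ Finset.Icc 1 n) :
    ∫ ω in ξ (n + 1) ⁻¹' {true} ∩ u (n + 1) ⁻¹' {k}, Z ω * f (X (n + 1) ω) ∂P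
      = α / n * ∫ ω, Z ω * f (X k ω) ∂P := by
  set A : Set Ω := ξ (n + 1) ⁻¹' {true} ∩ u (n + 1) ⁻¹' {k}
  have hA : MeasurableSet[noise ξ u g (past n)ᶜ] A :=
    (measurable_ξ (by simp [past]) (measurableSet_singleton true)).inter
      (measurable_u (by simp [past]) (measurableSet_singleton k))
  have hX_k : Measurable[noise ξ u g (past n)] (X k) :=
    hX.measurable_noise_past hd (Finset.mem_Icc.1 hk).1 (Finset.mem_Icc.1 hk).2
  calc ∫ ω in A, Z ω * f (X (n + 1) ω) ∂P
      = ∫ ω in A, Z ω * f (X k ω) ∂P := setIntegral_congr_fun (hd.noise_le _ hA) fun ω hω => by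
        obtain ⟨hξ : ξ (n + 1) ω = true, hu : u (n + 1) ω = k⟩ := hω
        simp only [hX.step (n + 1) (by omega) ω, if_pos hξ, hu]
    _ = α / n * ∫ ω, Z ω * f (X k ω) ∂P := by
        rw [hd.setIntegral_eq_smul (Z := fun ω => Z ω * f (X k ω)) disjoint_compl_left hA
          (hZ.mul (hf.comp hX_k)), hd.measureReal_reinforce_inter hα hn hk]
        simp

lemma setIntegral_reinforce (hX : IsReinforcedBy ξ u g X) (hd : IsDriving P α μ ξ u g)
    (hα : 0 ≤ α) (hn : 1 ≤ n) {Z : Ω → ℂ} (hZ : Measurable[noise ξ u g (past n)] Z)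
    {f : V → ℂ} (hf : Measurable f) (hint : Integrable (fun ω => Z ω * f (X (n + 1) ω)) P) :
    ∫ ω in ξ (n + 1) ⁻¹' {true}, Z ω * f (X (n + 1) ω) ∂P
      = α / n * ∑ k ∈ Finset.Icc 1 n, ∫ ω, Z ω * f (X k ω) ∂P := by
  set A : ℕ → Set Ω := fun k => ξ (n + 1) ⁻¹' {true} ∩ u (n + 1) ⁻¹' {k} with hA_def
  have hA k : MeasurableSet (A k) :=
    (hd.meas_ξ (n + 1) (measurableSet_singleton true)).inter
      (hd.meas_u (n + 1) (measurableSet_singleton k))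
  have hA_cover : ξ (n + 1) ⁻¹' {true} = ⋃ k ∈ Finset.Icc 1 n, A k := by
    ext ω
    have := hd.u_range (n + 1) (by omega) ω
    simp only [hA_def, Set.mem_preimage, Set.mem_singleton_iff, Finset.mem_Icc, Set.mem_iUnion,
      Set.mem_inter_iff, exists_and_left, exists_prop, ↓existsAndEq, and_true, iff_self_and]
    omega
  have hA_disj : (Finset.Icc 1 n : Set ℕ).PairwiseDisjoint A := fun i _ j _ hij =>
    ((Set.disjoint_singleton.2 hij).preimage _).mono Set.inter_subset_right Set.inter_subset_right
  rw [hA_cover, integral_biUnion_finset _ (fun k _ => hA k) hA_disj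
    (fun k _ => hint.integrableOn), Finset.mul_sum]
  exact Finset.sum_congr rfl fun k hk => hX.setIntegral_reinforce_inter hd hα hn hZ hf hk

lemma setIntegral_fresh (hX : IsReinforcedBy ξ u g X) (hd : IsDriving P α μ ξ u g)
    (hα : 0 ≤ α) (hn : 1 ≤ n) {Z : Ω → ℂ} (hZ : Measurable[noise ξ u g (past n)] Z)
    {f : V → ℂ} (hf : Measurable f) :
    ∫ ω in (ξ (n + 1) ⁻¹' {true})ᶜ, Z ω * f (X (n + 1) ω) ∂P
      = (1 - α) * ((∫ ω, Z ω ∂P) * ∫ v, f v ∂μ) := by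
  set F : Set Ω := (ξ (n + 1) ⁻¹' {true})ᶜ
  set S : Set (ℕ ⊕ ℕ ⊕ ℕ) := past n ∪ {.inr (.inr (n + 1))}
  have hF : MeasurableSet[noise ξ u g {.inl (n + 1)}] F :=
    (measurable_ξ (Set.mem_singleton _) (measurableSet_singleton true)).compl
  have hZ_S : Measurable[noise ξ u g S] Z :=
    hZ.mono (biSup_mono fun _ => Or.inl) le_rfl
  have hg_S : Measurable[noise ξ u g S] (g (n + 1)) := measurable_g (by simp [S])
  calc ∫ ω in F, Z ω * f (X (n + 1) ω) ∂P
      = ∫ ω in F, Z ω * f (g (n + 1) ω) ∂P :=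
        setIntegral_congr_fun (hd.noise_le _ hF) fun ω (hω : ¬ ξ (n + 1) ω = true) => by
          simp only [hX.step (n + 1) (by omega) ω, if_neg hω]
    _ = (1 - α) * ∫ ω, Z ω * f (g (n + 1) ω) ∂P := by
        rw [hd.setIntegral_eq_smul (Z := fun ω => Z ω * f (g (n + 1) ω)) (by simp [S, past]) hF
          (hZ_S.mul (hf.comp hg_S)), hd.measureReal_fresh hα (by omega)]
        simp
    _ = (1 - α) * ((∫ ω, Z ω ∂P) * ∫ v, f v ∂μ) := by
        rw [hd.integral_mul (S' := {.inr (.inr (n + 1))}) (Z := fun ω => f (g (n + 1) ω))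
          (by simp [past]) hZ (hf.comp (measurable_g (Set.mem_singleton _))),
          hd.integral_comp_g (by omega) hf]

lemma integral_mul_comp_succ (hX : IsReinforcedBy ξ u g X) (hd : IsDriving P α μ ξ u g)
    (hα : 0 ≤ α) (hn : 1 ≤ n) {Z : Ω → ℂ} (hZ : Measurable[noise ξ u g (past n)] Z)
    {f : V → ℂ} (hf : Measurable f) (hint : Integrable (fun ω => Z ω * f (X (n + 1) ω)) P) :
    ∫ ω, Z ω * f (X (n + 1) ω) ∂P
      = α / n * ∑ k ∈ Finset.Icc 1 n, ∫ ω, Z ω * f (X k ω) ∂P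
        + (1 - α) * ((∫ ω, Z ω ∂P) * ∫ v, f v ∂μ) := by
  rw [← integral_add_compl (hd.meas_ξ (n + 1) (measurableSet_singleton true)) hint,
    hX.setIntegral_reinforce hd hα hn hZ hf hint, hX.setIntegral_fresh hd hα hn hZ hf]

lemma measurable_noise_past_pos {V : Type*} [AddCommGroup V] [MeasurableSpace V]
    [MeasurableAdd₂ V] {μ : Measure V} {g X : ℕ → Ω → V} (hX : IsReinforcedBy ξ u g X)
    (hd : IsDriving P α μ ξ u g) : Measurable[noise ξ u g (past n)] (pos X n) :=
  @Finset.measurable_fun_sum _ _ _ _ _ _ (_) _ _ fun _ hk =>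
    hX.measurable_noise_past hd (by omega) (Finset.mem_range.1 hk)

end IsReinforcedBy

namespace IsSRRWAdd

lemma isProbabilityMeasure (hX : IsSRRWAdd P α μ X) : IsProbabilityMeasure P := by
  obtain ⟨ξ, u, g, hd, -⟩ := hX
  exact hd.indep.isProbabilityMeasure

lemma measurable (hX : IsSRRWAdd P α μ X) (hn : 1 ≤ n) : Measurable (X n) := by
  obtain ⟨ξ, u, g, hd, hX⟩ := hX.exists_isReinforcedBy
  exact (hX.measurable_noise_past hd hn le_rfl).mono hd.noise_le le_rfl

lemma measurable_pos {V : Type*} [AddCommGroup V] [MeasurableSpace V] [MeasurableAdd₂ V]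
    {μ : Measure V} {X : ℕ → Ω → V} (hX : IsSRRWAdd P α μ X) : Measurable (pos X n) :=
  Finset.measurable_fun_sum _ fun _ _ => hX.measurable (by omega)

lemma ae_step (hX : IsSRRWAdd P α μ X) {p : V → Prop} (hp : ∀ᵐ v ∂μ, p v) :
    ∀ᵐ ω ∂P, ∀ n, 1 ≤ n → p (X n ω) := by
  obtain ⟨ξ, u, g, hd, hX⟩ := hX.exists_isReinforcedBy
  have hfresh : ∀ᵐ ω ∂P, ∀ k, 1 ≤ k → p (g k ω) := by
    simp only [ae_all_iff]
    exact fun k hk => ae_of_ae_map (hd.meas_g k).aemeasurable ((hd.g_law k hk).symm ▸ hp)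
  filter_upwards [hfresh] with ω hω n hn
  obtain ⟨k, hk, hXk⟩ := hX.exists_eq_fresh hd ω hn
  exact hXk ▸ hω k hk

lemma integral_comp_one (hX : IsSRRWAdd P α μ X) {f : V → ℂ} (hf : Measurable f) :
    ∫ ω, f (X 1 ω) ∂P = ∫ v, f v ∂μ := by
  obtain ⟨ξ, u, g, hd, hX⟩ := hX.exists_isReinforcedBy
  simp only [hX.one, hd.integral_comp_g le_rfl hf]

lemma comp (hX : IsSRRWAdd P α μ X) {W : Type*} [MeasurableSpace W] {f : V → W}
    (hf : Measurable f) : IsSRRWAdd P α (μ.map f) (fun n ω => f (X n ω)) := by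
  have := hX.isProbabilityMeasure
  obtain ⟨ξ, u, g, hd, hX⟩ := hX.exists_isReinforcedBy
  have hfam : fam ξ u (fun n ω => f (g n ω))
      = fun i ω => Sum.map id (Sum.map id f) (fam ξ u g i ω) := by
    ext (n | n | n) ω <;> rfl
  have hmap : Measurable (Sum.map id (Sum.map id f) : Bool ⊕ ℕ ⊕ V → Bool ⊕ ℕ ⊕ W) :=
    measurable_id.sumMap (measurable_id.sumMap hf)
  have hd' : IsDriving P α (μ.map f) ξ u (fun n ω => f (g n ω)) :=
    { hd with
      meas_g := fun n => hf.comp (hd.meas_g n)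
      g_law := fun n hn => by rw [← hd.g_law n hn, Measure.map_map hf (hd.meas_g n)]; rfl
      indep := hfam ▸ hd.indep.comp _ fun _ => hmap }
  refine ⟨ξ, u, _, hd', fun _ => measurable_snd, fun _ _ => indepFun_const_right _ _,
    fun ω => congrArg f (hX.one ω), fun n hn ω => ?_⟩
  simp only [hX.step n hn ω, apply_ite f, id]

end IsSRRWAdd

end Reinforcement

lemma pos_eq_sum_Icc {Ω V : Type*} [AddCommGroup V] (X : ℕ → Ω → V) (n : ℕ) (ω : Ω) :
    pos X n ω = ∑ k ∈ Finset.Icc 1 n, X k ω := by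
  rw [pos, Finset.range_eq_Ico, Finset.sum_Ico_add' (fun k => X k ω), zero_add,
    Finset.Ico_add_one_right_eq_Icc]

section SignWalk

variable {Ω : Type*} [MeasurableSpace Ω] {P : Measure Ω} {α : ℝ} {μ : Measure ℝ}
  {X : ℕ → Ω → ℝ} {n : ℕ}

lemma exp_mul_I_of_eq_one_or_eq_neg_one {x : ℝ} (hx : x = 1 ∨ x = -1) (θ : ℝ) :
    Complex.exp (θ * x * Complex.I) = Real.cos θ + Real.sin θ * Complex.I * x := by
  rw [Complex.exp_mul_I]
  rcases hx with rfl | rfl <;> simp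

lemma prod_eq_I_pow_mul_exp {ι : Type*} (s : Finset ι) {ε : ι → ℝ}
    (hε : ∀ k ∈ s, ε k = 1 ∨ ε k = -1) :
    ((∏ k ∈ s, ε k : ℝ) : ℂ) = Complex.I ^ s.card *
      Complex.exp (↑(-(Real.pi / 2)) * ↑(∑ k ∈ s, ε k) * Complex.I) := by
  have hfactor k (hk : k ∈ s) : (ε k : ℂ)
      = Complex.I * Complex.exp (↑(-(Real.pi / 2)) * ε k * Complex.I) := by
    rw [exp_mul_I_of_eq_one_or_eq_neg_one (hε k hk), Real.cos_neg, Real.sin_neg,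
      Real.cos_pi_div_two, Real.sin_pi_div_two]
    push_cast
    linear_combination (ε k : ℂ) * Complex.I_sq
  rw [Complex.ofReal_prod, Finset.prod_congr rfl hfactor, Finset.prod_mul_distrib,
    Finset.prod_const, ← Complex.exp_sum, Complex.ofReal_sum, Finset.mul_sum, Finset.sum_mul]

namespace IsSRRWAdd

lemma charFun_pos_apply (hX : IsSRRWAdd P α μ X) (θ : ℝ) :
    charFun (P.map (pos X n)) θ = ∫ ω, Complex.exp (θ * pos X n ω * Complex.I) ∂P := by
  rw [charFun_apply_real, integral_map hX.measurable_pos.aemeasurable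
    (by fun_prop : Measurable fun x : ℝ => Complex.exp (θ * x * Complex.I)).aestronglyMeasurable]

lemma integrable_of_sign (hX : IsSRRWAdd P α μ X) (hμ : ∀ᵐ x ∂μ, x = 1 ∨ x = -1)
    (hn : 1 ≤ n) : Integrable (X n) P := by
  have := hX.isProbabilityMeasure
  refine Integrable.of_bound (hX.measurable hn).aestronglyMeasurable 1 ?_
  filter_upwards [hX.ae_step hμ] with ω hω
  rcases hω n hn with h | h <;> simp [h]

lemma integrable_exp_mul (hX : IsSRRWAdd P α μ X) {Z : Ω → ℝ} (hZ : Integrable Z P) (θ : ℝ) :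
    Integrable (fun ω => Complex.exp (θ * pos X n ω * Complex.I) * Z ω) P := by
  have hmeas : Measurable fun ω => Complex.exp (θ * pos X n ω * Complex.I) := by
    have := hX.measurable_pos (n := n)
    fun_prop
  refine hZ.ofReal.bdd_mul (c := 1) hmeas.aestronglyMeasurable (.of_forall fun ω => ?_)
  exact_mod_cast (Complex.norm_exp_ofReal_mul_I (θ * pos X n ω)).le

lemma deriv_charFun_pos (hX : IsSRRWAdd P α μ X)
    (hint : ∀ k ∈ Finset.Icc 1 n, Integrable (X k) P) (θ : ℝ) :
    deriv (charFun (P.map (pos X n))) θ = Complex.I *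
      ∑ k ∈ Finset.Icc 1 n, ∫ ω, Complex.exp (θ * pos X n ω * Complex.I) * X k ω ∂P := by
  have := hX.isProbabilityMeasure
  have := Measure.isProbabilityMeasure_map (hX.measurable_pos (n := n)).aemeasurable (μ := P)
  have hmoment : MemLp id (1 : ℕ) (P.map (pos X n)) := by
    rw [Nat.cast_one, memLp_one_iff_integrable, integrable_map_measure
      aestronglyMeasurable_id hX.measurable_pos.aemeasurable, Function.id_comp,
      _root_.funext (pos_eq_sum_Icc X n)]
    exact integrable_finsetSum _ hint
  rw [← iteratedDeriv_one, iteratedDeriv_charFun hmoment, integral_map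
    hX.measurable_pos.aemeasurable (by fun_prop : Measurable _).aestronglyMeasurable,
    ← integral_finsetSum _ fun k hk => hX.integrable_exp_mul (hint k hk) θ]
  simp only [pow_one, ← Finset.mul_sum, ← Complex.ofReal_sum, ← pos_eq_sum_Icc X]
  simp only [mul_comm]

lemma integral_exp_pos_mul_succ (hX : IsSRRWAdd P α μ X) (hmean : ∫ x, x ∂μ = 0) (hα : 0 ≤ α)
    (hn : 1 ≤ n) (hint : Integrable (X (n + 1)) P) (θ : ℝ) :
    ∫ ω, Complex.exp (θ * pos X n ω * Complex.I) * X (n + 1) ω ∂P = α / n *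
      ∑ k ∈ Finset.Icc 1 n, ∫ ω, Complex.exp (θ * pos X n ω * Complex.I) * X k ω ∂P := by
  obtain ⟨ξ, u, g, hd, hXr⟩ := hX.exists_isReinforcedBy
  have hmeas : Measurable[noise ξ u g (past n)]
      fun ω => Complex.exp (θ * pos X n ω * Complex.I) :=
    (by fun_prop : Measurable fun x : ℝ => Complex.exp (θ * x * Complex.I)).comp
      (hXr.measurable_noise_past_pos hd)
  rw [hXr.integral_mul_comp_succ hd hα hn hmeas Complex.measurable_ofReal
    (hX.integrable_exp_mul hint θ), integral_complex_ofReal, hmean, Complex.ofReal_zero,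
    mul_zero, mul_zero, add_zero]

lemma charFun_pos_one (hX : IsSRRWAdd P α μ X) (hμ : ∀ᵐ x ∂μ, x = 1 ∨ x = -1)
    (hmean : ∫ x, x ∂μ = 0) (θ : ℝ) : charFun (P.map (pos X 1)) θ = Real.cos θ := by
  have := hX.isProbabilityMeasure
  have hX_mean : ∫ ω, (X 1 ω : ℂ) ∂P = 0 := by
    rw [hX.integral_comp_one Complex.measurable_ofReal, integral_complex_ofReal, hmean,
      Complex.ofReal_zero]
  have hstep : ∀ᵐ ω ∂P, Complex.exp (θ * pos X 1 ω * Complex.I)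
      = Real.cos θ + Real.sin θ * Complex.I * X 1 ω := by
    filter_upwards [hX.ae_step hμ] with ω hω
    rw [pos, Finset.sum_range_one, exp_mul_I_of_eq_one_or_eq_neg_one (hω 1 le_rfl)]
  rw [hX.charFun_pos_apply, integral_congr_ae hstep, integral_add (integrable_const _)
    ((hX.integrable_of_sign hμ le_rfl).ofReal.const_mul _), integral_const_mul, hX_mean]
  simp

/-- A fair sign step contributes `cos θ`, whereas a reinforced one tilts the walk towards its
current position, which differentiates the characteristic function. -/
lemma charFun_pos_succ (hX : IsSRRWAdd P α μ X) (hμ : ∀ᵐ x ∂μ, x = 1 ∨ x = -1)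
    (hmean : ∫ x, x ∂μ = 0) (hα : 0 ≤ α) (hn : 1 ≤ n) (θ : ℝ) :
    charFun (P.map (pos X (n + 1))) θ = Real.cos θ * charFun (P.map (pos X n)) θ
      + α / n * Real.sin θ * deriv (charFun (P.map (pos X n))) θ := by
  have := hX.isProbabilityMeasure
  have hstep : ∀ᵐ ω ∂P, Complex.exp (θ * pos X (n + 1) ω * Complex.I)
      = Real.cos θ * Complex.exp (θ * pos X n ω * Complex.I) + Real.sin θ * Complex.I *
        (Complex.exp (θ * pos X n ω * Complex.I) * X (n + 1) ω) := by
    filter_upwards [hX.ae_step hμ] with ω hω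
    rw [pos, Finset.sum_range_succ, ← pos, Complex.ofReal_add, mul_add, add_mul, Complex.exp_add,
      exp_mul_I_of_eq_one_or_eq_neg_one (hω (n + 1) (by omega))]
    ring
  have hint k (hk : 1 ≤ k) : Integrable (X k) P := hX.integrable_of_sign hμ hk
  have hint_exp : Integrable (fun ω => Complex.exp (θ * pos X n ω * Complex.I)) P := by
    simpa using hX.integrable_exp_mul (integrable_const 1) θ
  rw [hX.charFun_pos_apply, hX.charFun_pos_apply,
    hX.deriv_charFun_pos fun k hk => hint k (Finset.mem_Icc.1 hk).1, integral_congr_ae hstep,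
    integral_add (hint_exp.const_mul _)
      ((hX.integrable_exp_mul (hint (n + 1) (by omega)) θ).const_mul _),
    integral_const_mul, integral_const_mul,
    hX.integral_exp_pos_mul_succ hmean hα hn (hint (n + 1) (by omega))]
  ring

end IsSRRWAdd

lemma eval_cos_elephantPoly_succ (α : ℝ) (hn : 1 ≤ n) (θ : ℝ) :
    (elephantPoly α (n + 1)).eval (Real.cos θ) = Real.cos θ * (elephantPoly α n).eval (Real.cos θ)
      + α / n * Real.sin θ * deriv (fun t => (elephantPoly α n).eval (Real.cos t)) θ := by
  obtain ⟨m, rfl⟩ := Nat.exists_eq_add_of_le' hn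
  have hderiv : HasDerivAt (fun t => (elephantPoly α (m + 1)).eval (Real.cos t)) _ θ :=
    ((elephantPoly α (m + 1)).hasDerivAt (Real.cos θ)).comp θ (Real.hasDerivAt_cos θ)
  simp only [elephantPoly, hderiv.deriv, eval_sub, eval_mul, eval_X, eval_C, eval_one, eval_pow,
    ← Real.sin_sq, Nat.cast_add, Nat.cast_one]
  ring

theorem IsSRRWAdd.charFun_pos (hX : IsSRRWAdd P α μ X) (hμ : ∀ᵐ x ∂μ, x = 1 ∨ x = -1)
    (hmean : ∫ x, x ∂μ = 0) (hα : 0 ≤ α) (n : ℕ) (θ : ℝ) :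
    charFun (P.map (pos X n)) θ = ((elephantPoly α n).eval (Real.cos θ) : ℝ) := by
  have := hX.isProbabilityMeasure
  obtain rfl | hn := Nat.eq_zero_or_pos n
  · rw [hX.charFun_pos_apply]
    simp [pos, elephantPoly]
  induction n, hn using Nat.le_induction generalizing θ with
  | base => simp [hX.charFun_pos_one hμ hmean, elephantPoly]
  | succ n hn ih =>
    have hderiv : deriv (charFun (P.map (pos X n))) θ
        = (deriv (fun t => (elephantPoly α n).eval (Real.cos t)) θ : ℝ) := by
      have hdiff : DifferentiableAt ℝ (fun t => (elephantPoly α n).eval (Real.cos t)) θ :=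
        (elephantPoly α n).differentiableAt.comp θ Real.differentiableAt_cos
      rw [_root_.funext ih, hdiff.hasDerivAt.ofReal_comp.deriv]
    rw [hX.charFun_pos_succ hμ hmean hα hn, ih, hderiv, eval_cos_elephantPoly_succ α hn]
    push_cast
    rfl

end SignWalk

lemma addChar_pos {Ω V M : Type*} [AddCommGroup V] [CommMonoid M] (χ : AddChar V M) (X : ℕ → Ω → V)
    (n : ℕ) (ω : Ω) : χ (pos X n ω) = ∏ k ∈ Finset.range n, χ (X (k + 1) ω) := by
  induction n with
  | zero => simp [pos]
  | succ n ih => rw [pos, Finset.sum_range_succ, ← pos, χ.map_add_eq_mul, ih,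
      Finset.prod_range_succ]

lemma integral_eq_two_mul_measureReal_sub_one {Ω : Type*} [MeasurableSpace Ω] {P : Measure Ω}
    [IsProbabilityMeasure P] {Y : Ω → ℝ} (hY : Measurable Y) (hsign : ∀ ω, Y ω = 1 ∨ Y ω = -1) :
    ∫ ω, Y ω ∂P = 2 * P.real {ω | Y ω = 1} - 1 := by
  have hmeas : MeasurableSet {ω | Y ω = 1} := hY (measurableSet_singleton 1)
  have hY_eq ω : Y ω = 2 * {ω | Y ω = 1}.indicator 1 ω - 1 := by
    rcases hsign ω with h | h <;> norm_num [Set.indicator, h]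
  rw [integral_congr_ae (.of_forall hY_eq), integral_sub
    (((integrable_const 1).indicator hmeas).const_mul 2) (integrable_const 1), integral_const_mul,
    integral_indicator_one hmeas]
  simp

/-- The nontrivial character `x ↦ (-1) ^ x` of `ℤ₂`, with real values. -/
noncomputable def zmodTwoSign : AddChar (ZMod 2) ℝ :=
  AddChar.zmodChar 2 (ζ := -1) (by norm_num)

lemma zmodTwoSign_eq_one_or_eq_neg_one (x : ZMod 2) : zmodTwoSign x = 1 ∨ zmodTwoSign x = -1 :=
  neg_one_pow_eq_or ℝ x.val

lemma zmodTwoSign_eq_one_iff {x : ZMod 2} : zmodTwoSign x = 1 ↔ x = 0 := by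
  rw [zmodTwoSign, AddChar.zmodChar_apply, neg_one_pow_eq_one_iff_even (by norm_num),
    ← ZMod.natCast_eq_zero_iff_even, ZMod.natCast_zmod_val]

lemma exp_pi_mul_I_mul_val (x : ZMod 2) :
    Complex.exp ((Real.pi : ℂ) * Complex.I * (x.val : ℂ)) = (zmodTwoSign x : ℂ) := by
  rw [mul_comm, Complex.exp_nat_mul, Complex.exp_pi_mul_I, zmodTwoSign, AddChar.zmodChar_apply]
  push_cast
  rfl

lemma integral_zmodTwoSign [MeasurableSpace (ZMod 2)] [MeasurableSingletonClass (ZMod 2)]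
    {μ : Measure (ZMod 2)} [IsFiniteMeasure μ] (hμ : μ {0} = μ {1}) :
    ∫ x, zmodTwoSign x ∂μ = 0 := by
  have hone : zmodTwoSign 1 = -1 :=
    (zmodTwoSign_eq_one_or_eq_neg_one 1).resolve_left (zmodTwoSign_eq_one_iff.not.2 one_ne_zero)
  have huniv : (Finset.univ : Finset (ZMod 2)) = {0, 1} := rfl
  rw [integral_fintype .of_finite, huniv, Finset.sum_pair zero_ne_one, measureReal_def,
    measureReal_def, hμ, AddChar.map_zero_eq_one, hone, smul_neg, add_neg_cancel]

end SRRW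

theorem srrw_zmod_two_elephant_poly_general {Ω V : Type*} [MeasurableSpace Ω] [AddCommGroup V]
    [MeasurableSpace V] {P : Measure Ω} {μ : Measure V} {α : ℝ} (hα : 0 ≤ α) {X : ℕ → Ω → V}
    (hX : IsSRRWAdd P α μ X) {χ : AddChar V ℝ} (hχ : Measurable χ)
    (hsign : ∀ v, χ v = 1 ∨ χ v = -1) (hmean : ∫ v, χ v ∂μ = 0) (n : ℕ) :
    (∫ ω, (χ (pos X n ω) : ℂ) ∂P)
        = ((2 * (P {ω | χ (pos X n ω) = 1}).toReal - 1 : ℝ) : ℂ) ∧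
    (∫ ω, (χ (pos X n ω) : ℂ) ∂P)
        = Complex.I ^ n * (((elephantPoly α n).eval 0 : ℝ) : ℂ) := by
  have := hX.isProbabilityMeasure
  have hY : IsSRRWAdd P α (μ.map χ) fun n ω => χ (X n ω) := hX.comp hχ
  have hY_sign : ∀ᵐ x ∂μ.map χ, x = 1 ∨ x = -1 :=
    (ae_map_iff hχ.aemeasurable <|
      (measurableSet_singleton (1 : ℝ)).union (measurableSet_singleton (-1))).2 (.of_forall hsign)
  have hY_mean : ∫ x, x ∂μ.map χ = 0 :=
    (integral_map hχ.aemeasurable aestronglyMeasurable_id).trans hmean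
  constructor
  · have hmeas : Measurable fun ω => χ (pos X n ω) := by
      simp only [addChar_pos]
      exact Finset.measurable_fun_prod _ fun _ _ => hY.measurable (by omega)
    rw [integral_complex_ofReal,
      integral_eq_two_mul_measureReal_sub_one hmeas fun ω => hsign (pos X n ω), measureReal_def]
  · have hprod ω := prod_eq_I_pow_mul_exp (Finset.range n) fun k _ => hsign (X (k + 1) ω)
    simp only [addChar_pos, hprod, integral_const_mul, Finset.card_range]
    rw [← Real.cos_pi_div_two, ← Real.cos_neg, ← hY.charFun_pos hY_sign hY_mean hα,
      hY.charFun_pos_apply]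
    rfl

/-- **The SRRW on `ℤ₂` and the elephant polynomials.**  Let `S` be the usual SRRW on
`(ℤ₂, +)` with reinforcement parameter `α ∈ [0,1)` and uniform step distribution, and
let `(R_n)` be the elephant polynomials with the same parameter.  Then for every `n ≥ 1`,
`E[exp(iπ S_n)] = 2 ℙ(S_n = 0) - 1 = iⁿ R_n(0)`. -/
theorem srrw_zmod_two_elephant_poly
    [MeasurableSpace (ZMod 2)] [MeasurableSingletonClass (ZMod 2)]
    {Ω : Type*} [MeasurableSpace Ω] (P : Measure Ω) [IsProbabilityMeasure P]
    (μ : Measure (ZMod 2)) [IsProbabilityMeasure μ]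
    (hμ0 : μ {(0 : ZMod 2)} = 1 / 2) (hμ1 : μ {(1 : ZMod 2)} = 1 / 2)
    (α : ℝ) (hα0 : 0 ≤ α) (hα1 : α < 1)
    (X : ℕ → Ω → ZMod 2) (hX : IsSRRWAdd P α μ X) (n : ℕ) (hn : 1 ≤ n) :
    (∫ ω, Complex.exp ((Real.pi : ℂ) * Complex.I * ((pos X n ω).val : ℂ)) ∂P)
        = ((2 * (P {ω | pos X n ω = 0}).toReal - 1 : ℝ) : ℂ) ∧
    (∫ ω, Complex.exp ((Real.pi : ℂ) * Complex.I * ((pos X n ω).val : ℂ)) ∂P)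
        = Complex.I ^ n * (((elephantPoly α n).eval 0 : ℝ) : ℂ) := by
  simpa only [exp_pi_mul_I_mul_val, zmodTwoSign_eq_one_iff] using
    srrw_zmod_two_elephant_poly_general hα0 hX (Measurable.of_discrete)
      zmodTwoSign_eq_one_or_eq_neg_one (integral_zmodTwoSign (hμ0.trans hμ1.symm)) n
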